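/- For z = x + iy with y > 0, let A(z) ∈ M₃(ℝ) be the matrix whose columns are f(z), y·(∂f/∂x)(z), and y·(∂f/∂y)(z), and let h(z) be the Cheng–Yau matrix at f(z). Then A(z)ᵀ·h(z)·A(z) = I₃; that is, the triple (f, y·f_x, y·f_y) is an orthonormal frame for the Cheng–Yau metric of the cone along the hyperboloid. -/

import Mathlib

open Matrix

noncomputable section

/-- The parametrization `f(x+iy) = (x/y, (x²+y²-1)/(2y), (x²+y²+1)/(2y))` of the
hyperboloid. -/
def f (z : ℂ) : Fin 3 → ℝ :=
  ![z.re / z.im, (z.re ^ 2 + z.im ^ 2 - 1) / (2 * z.im),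
    (z.re ^ 2 + z.im ^ 2 + 1) / (2 * z.im)]

/-- The matrix whose columns are `f(z)`, `y·(∂f/∂x)(z)` and `y·(∂f/∂y)(z)`. -/
def frameA (z : ℂ) : Matrix (Fin 3) (Fin 3) ℝ :=
  Matrix.of fun i j =>
    ![f z, z.im • fderiv ℝ f z 1, z.im • fderiv ℝ f z Complex.I] j i

/-- The matrix of the Cheng–Yau metric at the point `f(z)` of the hyperboloid,
where `z = x + iy` with `y > 0`. -/
def hR (z : ℂ) : Matrix (Fin 3) (Fin 3) ℝ :=
  let x := z.re; let y := z.im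
  !![2 * x ^ 2 / y ^ 2 + 1, x * (x ^ 2 + y ^ 2 - 1) / y ^ 2,
       -x * (x ^ 2 + y ^ 2 + 1) / y ^ 2;
     x * (x ^ 2 + y ^ 2 - 1) / y ^ 2, (x ^ 2 + y ^ 2 - 1) ^ 2 / (2 * y ^ 2) + 1,
       -((x ^ 2 + y ^ 2 - 1) * (x ^ 2 + y ^ 2 + 1)) / (2 * y ^ 2);
     -x * (x ^ 2 + y ^ 2 + 1) / y ^ 2,
       -((x ^ 2 + y ^ 2 - 1) * (x ^ 2 + y ^ 2 + 1)) / (2 * y ^ 2),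
       (x ^ 2 + y ^ 2 + 1) ^ 2 / (2 * y ^ 2) - 1]

end

/-!
Let `J = diag(1, 1, -1)`. At a point `p` of the hyperboloid the Cheng–Yau matrix is
`J + 2 (Jp)(Jp)ᵀ`, that is, `J` with its sign flipped on the line through `p`. The frame `A`
satisfies `Aᵀ J A = diag(-1, 1, 1)`: the position vector `f` is timelike of square `-1`, and since
`y • df v = (v.re, ⟪z, v⟫, ⟪z, v⟫) - v.im • f`, the vectors `y • f_x`, `y • f_y` are `J`-orthonormal
and `J`-orthogonal to `f`. Flipping the sign on `f` turns `diag(-1, 1, 1)` into the identity.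
-/

section ChengYau

variable {m n R : Type*} [Fintype n] [CommRing R]

/-- The matrix of the Cheng–Yau metric of the cone `{p | pᵀ G p < 0}` at a point `p` with
`pᵀ G p = -1`, for a symmetric matrix `G` of Lorentzian signature. It is the Hessian at `p` of
`-½ log (-pᵀ G p)`, written out so that it makes sense over any commutative ring. -/
def chengYauMatrix (G : Matrix n n R) (p : n → R) : Matrix n n R :=
  G + (2 : R) • vecMulVec (G *ᵥ p) (G *ᵥ p)

theorem transpose_mul_chengYauMatrix_mul [Fintype m] (G : Matrix n n R) (A : Matrix n m R)
    (p : m → R) : Aᵀ * chengYauMatrix G (A *ᵥ p) * A = chengYauMatrix (Aᵀ * G * A) p := by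
  simp only [chengYauMatrix, Matrix.mul_add, Matrix.add_mul, Matrix.mul_smul, Matrix.smul_mul,
    mul_vecMulVec, vecMulVec_mul, ← mulVec_transpose A, mulVec_mulVec, Matrix.mul_assoc]

variable [DecidableEq n]

/-- The Gram matrix `diag(1, …, 1, -1, 1, …, 1)` of the Lorentz form on `n → R`, with the entry `-1`
at the timelike coordinate `i`. -/
def minkowskiMatrix (R : Type*) [CommRing R] (i : n) : Matrix n n R :=
  1 - Matrix.single i i 2

theorem minkowskiMatrix_mulVec (i : n) (v : n → R) :
    minkowskiMatrix R i *ᵥ v = v - (2 * v i) • Pi.single i 1 := by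
  rw [minkowskiMatrix, sub_mulVec, one_mulVec, single_mulVec_eq]

theorem chengYauMatrix_minkowskiMatrix_single (i : n) :
    chengYauMatrix (minkowskiMatrix R i) (Pi.single i 1) = 1 := by
  have mulVec_single : minkowskiMatrix R i *ᵥ Pi.single i 1 = -Pi.single i 1 := by
    rw [minkowskiMatrix_mulVec, Pi.single_eq_same]
    module
  rw [chengYauMatrix, mulVec_single, neg_vecMulVec, vecMulVec_neg, neg_neg,
    ← single_eq_single_vecMulVec_single, smul_single, smul_eq_mul, mul_one, minkowskiMatrix,
    sub_add_cancel]

/-- The Lorentz form on `n → R` with timelike coordinate `i`. -/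
def lorentzForm (i : n) : LinearMap.BilinForm R (n → R) :=
  (minkowskiMatrix R i).toBilin'

theorem lorentzForm_apply (i : n) (u v : n → R) :
    lorentzForm i u v = u ⬝ᵥ v - 2 * (u i * v i) := by
  rw [lorentzForm, toBilin'_apply', minkowskiMatrix_mulVec, dotProduct_sub, dotProduct_smul,
    dotProduct_single_one, smul_eq_mul]
  ring

theorem lorentzForm_comm (i : n) (u v : n → R) : lorentzForm i u v = lorentzForm i v u := by
  rw [lorentzForm_apply, lorentzForm_apply, dotProduct_comm, mul_comm (u i)]

theorem transpose_mul_minkowskiMatrix_mul (i : n) (A : Matrix n m R) :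
    Aᵀ * minkowskiMatrix R i * A = of fun j k => lorentzForm i (A.col j) (A.col k) := by
  ext j k
  rw [Matrix.mul_assoc, of_apply, lorentzForm, toBilin'_apply']
  rfl

end ChengYau

section Hyperboloid

theorem hR_eq_chengYauMatrix (z : ℂ) : hR z = chengYauMatrix (minkowskiMatrix ℝ 2) (f z) := by
  have mulVec_f : minkowskiMatrix ℝ 2 *ᵥ f z = ![f z 0, f z 1, -f z 2] := by
    rw [minkowskiMatrix_mulVec]
    ext i
    fin_cases i <;> simp
    ring
  rw [chengYauMatrix, mulVec_f]
  ext i j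
  fin_cases i <;> fin_cases j <;> simp [hR, minkowskiMatrix, f] <;> ring

/-- The rescaled parametrization `y • f(x + iy)`, with polynomial entries in `x` and `y`. It takes
values in the plane `x₃ - x₂ = 1`, which cuts the cone in the inside of a parabola. -/
noncomputable def parabolicChart (z : ℂ) : Fin 3 → ℝ :=
  ![z.re, (‖z‖ ^ 2 - 1) / 2, (‖z‖ ^ 2 + 1) / 2]

/-- The derivative of `parabolicChart` at `z`, sending `v` to `(v.re, ⟪z, v⟫, ⟪z, v⟫)`. -/
noncomputable def parabolicChartDeriv (z : ℂ) : ℂ →L[ℝ] Fin 3 → ℝ :=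
  .pi ![Complex.reCLM, innerSL ℝ z, innerSL ℝ z]

theorem parabolicChartDeriv_apply (z v : ℂ) :
    parabolicChartDeriv z v = ![v.re, inner ℝ z v, inner ℝ z v] := by
  ext i
  fin_cases i <;> rfl

theorem hasFDerivAt_parabolicChart (z : ℂ) :
    HasFDerivAt parabolicChart (parabolicChartDeriv z) z := by
  have half_norm_sq : HasFDerivAt (fun w : ℂ => ‖w‖ ^ 2 / 2) (innerSL ℝ z) z := by
    simpa [div_eq_inv_mul, smul_smul, ← ofNat_smul_eq_nsmul ℝ] using
      (hasStrictFDerivAt_norm_sq z).hasFDerivAt.const_mul (2⁻¹ : ℝ)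
  refine hasFDerivAt_pi'.2 fun i => ?_
  fin_cases i
  · exact Complex.reCLM.hasFDerivAt
  · simpa [parabolicChart, sub_div] using! half_norm_sq.sub_const (1 / 2)
  · simpa [parabolicChart, add_div] using! half_norm_sq.add_const (1 / 2)

theorem f_eq_smul_parabolicChart (z : ℂ) : f z = z.im⁻¹ • parabolicChart z := by
  ext i
  fin_cases i <;> simp [f, parabolicChart, Complex.sq_norm, Complex.normSq_apply] <;> ring

theorem hasFDerivAt_f {z : ℂ} (hz : z.im ≠ 0) :
    HasFDerivAt f (z.im⁻¹ • (parabolicChartDeriv z - Complex.imCLM.smulRight (f z))) z := by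
  have inv_im : HasFDerivAt (fun w : ℂ => w.im⁻¹) (-(z.im ^ 2)⁻¹ • Complex.imCLM) z :=
    (hasDerivAt_inv hz).comp_hasFDerivAt z Complex.imCLM.hasFDerivAt
  refine ((inv_im.smul (hasFDerivAt_parabolicChart z)).congr_fderiv ?_).congr_of_eventuallyEq
    (.of_eq (funext f_eq_smul_parabolicChart))
  ext1 v
  change z.im⁻¹ • parabolicChartDeriv z v + (-(z.im ^ 2)⁻¹ * v.im) • parabolicChart z =
    z.im⁻¹ • (parabolicChartDeriv z v - v.im • f z)
  rw [f_eq_smul_parabolicChart, ← inv_pow]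
  module

/-- The differential `y • df` at `x + iy`, whose values at `1` and `I` are the last two columns of
`frameA`. -/
noncomputable def scaledDeriv (z : ℂ) : ℂ →L[ℝ] Fin 3 → ℝ :=
  z.im • fderiv ℝ f z

theorem scaledDeriv_apply {z : ℂ} (hz : z.im ≠ 0) (v : ℂ) :
    scaledDeriv z v = parabolicChartDeriv z v - v.im • f z := by
  rw [scaledDeriv, (hasFDerivAt_f hz).fderiv, smul_inv_smul₀ hz]
  rfl

theorem lorentzForm_two_apply (u v : Fin 3 → ℝ) :
    lorentzForm 2 u v = u 0 * v 0 + u 1 * v 1 - u 2 * v 2 := by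
  rw [lorentzForm_apply, dotProduct, Fin.sum_univ_three]
  ring

theorem lorentzForm_parabolicChart (z : ℂ) :
    lorentzForm 2 (parabolicChart z) (parabolicChart z) = -z.im ^ 2 := by
  simp only [lorentzForm_two_apply, parabolicChart, cons_val]
  linear_combination -Complex.sq_norm_sub_sq_re z

theorem lorentzForm_parabolicChart_parabolicChartDeriv (z v : ℂ) :
    lorentzForm 2 (parabolicChart z) (parabolicChartDeriv z v) = -(z.im * v.im) := by
  simp only [lorentzForm_two_apply, parabolicChart, parabolicChartDeriv_apply, Complex.inner,
    Complex.mul_re, Complex.conj_re, Complex.conj_im, cons_val]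
  ring

theorem lorentzForm_parabolicChartDeriv (z v w : ℂ) :
    lorentzForm 2 (parabolicChartDeriv z v) (parabolicChartDeriv z w) = v.re * w.re := by
  simp only [lorentzForm_two_apply, parabolicChartDeriv_apply, cons_val]
  ring

theorem lorentzForm_f {z : ℂ} (hz : z.im ≠ 0) : lorentzForm 2 (f z) (f z) = -1 := by
  rw [f_eq_smul_parabolicChart, LinearMap.map_smul₂, map_smul, lorentzForm_parabolicChart,
    smul_eq_mul, smul_eq_mul]
  field_simp

theorem lorentzForm_f_parabolicChartDeriv {z : ℂ} (hz : z.im ≠ 0) (v : ℂ) :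
    lorentzForm 2 (f z) (parabolicChartDeriv z v) = -v.im := by
  rw [f_eq_smul_parabolicChart, LinearMap.map_smul₂, lorentzForm_parabolicChart_parabolicChartDeriv,
    smul_eq_mul, mul_neg, inv_mul_cancel_left₀ hz]

theorem lorentzForm_f_scaledDeriv {z : ℂ} (hz : z.im ≠ 0) (v : ℂ) :
    lorentzForm 2 (f z) (scaledDeriv z v) = 0 := by
  rw [scaledDeriv_apply hz, map_sub, map_smul, lorentzForm_f_parabolicChartDeriv hz,
    lorentzForm_f hz, smul_eq_mul, mul_neg_one, sub_self]

theorem lorentzForm_scaledDeriv {z : ℂ} (hz : z.im ≠ 0) (v w : ℂ) :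
    lorentzForm 2 (scaledDeriv z v) (scaledDeriv z w) = inner ℝ v w := by
  calc
    _ = lorentzForm 2 (parabolicChartDeriv z v) (scaledDeriv z w) := by
      rw [scaledDeriv_apply hz v, LinearMap.map_sub₂, LinearMap.map_smul₂,
        lorentzForm_f_scaledDeriv hz, smul_zero, sub_zero]
    _ = v.re * w.re + w.im * v.im := by
      rw [scaledDeriv_apply hz, map_sub, map_smul, lorentzForm_parabolicChartDeriv,
        lorentzForm_comm, lorentzForm_f_parabolicChartDeriv hz, smul_eq_mul,
        mul_neg, sub_neg_eq_add]
    _ = inner ℝ v w := by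
      simp only [Complex.inner, Complex.mul_re, Complex.conj_re, Complex.conj_im]
      ring

theorem frameA_mulVec_single_zero (z : ℂ) : frameA z *ᵥ Pi.single 0 1 = f z :=
  mulVec_single_one _ _

theorem transpose_frameA_mul_minkowskiMatrix_mul_frameA {z : ℂ} (hz : z.im ≠ 0) :
    (frameA z)ᵀ * minkowskiMatrix ℝ 2 * frameA z = minkowskiMatrix ℝ 0 := by
  have col_zero : (frameA z).col 0 = f z := rfl
  have col_one : (frameA z).col 1 = scaledDeriv z 1 := rfl
  have col_two : (frameA z).col 2 = scaledDeriv z Complex.I := rfl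
  have scaledDeriv_orthogonal (v : ℂ) : lorentzForm 2 (scaledDeriv z v) (f z) = 0 := by
    rw [lorentzForm_comm, lorentzForm_f_scaledDeriv hz]
  rw [transpose_mul_minkowskiMatrix_mul]
  ext i j
  fin_cases i <;> fin_cases j <;>
    simp [col_zero, col_one, col_two, lorentzForm_f hz, lorentzForm_f_scaledDeriv hz,
      scaledDeriv_orthogonal, lorentzForm_scaledDeriv hz, minkowskiMatrix]
  norm_num

end Hyperboloid

theorem stmt17_general (z : ℂ) (hz : z.im ≠ 0) : (frameA z)ᵀ * hR z * frameA z = 1 := by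
  rw [hR_eq_chengYauMatrix, ← frameA_mulVec_single_zero, transpose_mul_chengYauMatrix_mul,
    transpose_frameA_mul_minkowskiMatrix_mul_frameA hz, chengYauMatrix_minkowskiMatrix_single]

/-- The triple `(f, y·f_x, y·f_y)` is an orthonormal frame for the Cheng–Yau
metric along the hyperboloid: `A(z)ᵀ·h(z)·A(z) = I₃`. -/
theorem stmt17 (z : ℂ) (hz : 0 < z.im) :
    (frameA z)ᵀ * hR z * frameA z = 1 :=
  stmt17_general z hz.ne'
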